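/- arXiv:1307.2081 — 3 statements merged into one kernel-verified Lean document; each statement's English description precedes it below -/
import Mathlib

section
/- Let 0 ≤ r ≤ 1/2, t ≥ 0, and let G = exp(t • A(r)). Then the entries of G satisfy: |G₁₁| ≤ 2(e^{−r²t/4} + r²·e^{−3t/4}), |G₁₂| ≤ 2r(e^{−r²t/4} + e^{−3t/4}), |G₂₁| ≤ 2r(e^{−r²t/4} + e^{−3t/4}), and |G₂₂| ≤ 2(r²·e^{−r²t/4} + e^{−3t/4}). -/
/-- The Fourier symbol (at frequency radius `r`) of the linearized damped Euler system. -/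
noncomputable def Amat (r : ℝ) : Matrix (Fin 2) (Fin 2) ℝ := !![0, -r; r, -1]

lemma aux_tanh (u : ℝ) (hu : 0 ≤ u) : 1 - Real.exp (-u) ≤ u * (1 + Real.exp (-u)) / 2 := by
  have hmono : MonotoneOn (fun u : ℝ => u * (1 + Real.exp (-u)) / 2 - (1 - Real.exp (-u)))
      (Set.Ici 0) := by
    have hd : ∀ x : ℝ, HasDerivAt
        (fun u : ℝ => u * (1 + Real.exp (-u)) / 2 - (1 - Real.exp (-u)))
        ((1 * (1 + Real.exp (-x)) + x * (Real.exp (-x) * (-1))) / 2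
          - (- (Real.exp (-x) * (-1)))) x := by
      intro x
      have he : HasDerivAt (fun u : ℝ => Real.exp (-u)) (Real.exp (-x) * (-1)) x :=
        (hasDerivAt_neg x).exp
      exact (((hasDerivAt_id x).mul (he.const_add 1)).div_const 2).sub (he.const_sub 1)
    apply monotoneOn_of_deriv_nonneg (convex_Ici 0)
    · exact fun x _ => (hd x).continuousAt.continuousWithinAt
    · exact fun x _ => (hd x).differentiableAt.differentiableWithinAt
    · intro x _
      rw [(hd x).deriv]
      have h1 : x + 1 ≤ Real.exp x := Real.add_one_le_exp x
      have h2 : Real.exp x * Real.exp (-x) = 1 := by rw [← Real.exp_add]; simp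
      nlinarith [Real.exp_pos (-x)]
  have := hmono (Set.mem_Ici.2 le_rfl) (Set.mem_Ici.2 hu) hu
  simp at this
  linarith

lemma aux_te (α t : ℝ) : (8/3) * (α * t) * Real.exp (-(α * t)) ≤ 1 ∨ α * t < 0 := by
  by_cases h : α * t < 0
  · exact Or.inr h
  left
  push Not at h
  have h1 := Real.add_one_le_exp (α * t - 1)
  have h2 : Real.exp (α * t) * Real.exp (-(α * t)) = 1 := by rw [← Real.exp_add]; simp
  have h3 : Real.exp (α * t) = Real.exp 1 * Real.exp (α * t - 1) := by
    rw [← Real.exp_add]; ring_nf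
  have h4 := Real.exp_one_gt_d9
  have h5 : (8/3) * (α * t) ≤ Real.exp (α * t) := by
    rw [h3]
    apply mul_le_mul <;> linarith [Real.exp_pos 1]
  nlinarith [Real.exp_pos (-(α * t))]

lemma aux_S (a b t : ℝ) (ha : 0 ≤ a) (hab : a < b) (h1 : a + b = 1) (ht : 0 ≤ t) :
    Real.exp (-a * t) - Real.exp (-b * t) ≤ (b - a) * (2 * b * Real.exp (-(a * b) * t / 4)) := by
  have hb : b = 1 - a := by linarith
  have hE := Real.exp_pos (-(a * b) * t / 4)
  by_cases hc : a ≤ 3 / 16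
  · have hx : Real.exp (-a * t) ≤ Real.exp (-(a * b) * t / 4) := by
      apply Real.exp_le_exp.2
      have : 0 ≤ a * t := by positivity
      rw [hb]; nlinarith [mul_nonneg ha this]
    have hy := Real.exp_pos (-b * t)
    have : 1 ≤ (b - a) * (2 * b) := by rw [hb]; nlinarith
    nlinarith
  · push Not at hc
    have ha2 : a < 1 / 2 := by linarith
    set α := a * (3 + a) / 4 with hα
    set β := b * (3 + b) / 4 with hβ
    have hb0 : 0 < b := by linarith
    have hα0 : 0 < α := by positivity
    have hβ0 : 0 < β := by positivity
    have ex : Real.exp (-a * t) = Real.exp (-(a * b) * t / 4) * Real.exp (-(α * t)) := by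
      rw [← Real.exp_add, hα, hb]; ring_nf
    have ey : Real.exp (-b * t) = Real.exp (-(a * b) * t / 4) * Real.exp (-(β * t)) := by
      rw [← Real.exp_add, hβ, hb]; ring_nf
    have exy : Real.exp (-(β * t)) = Real.exp (-(α * t)) * Real.exp (-((b - a) * t)) := by
      rw [← Real.exp_add, hβ, hα, hb]; ring_nf
    have hu : 0 ≤ (b - a) * t := mul_nonneg (by linarith) ht
    have k1 := aux_tanh _ hu
    have k2 : (8/3) * (α * t) * Real.exp (-(α * t)) ≤ 1 :=
      (aux_te α t).resolve_right (not_lt.2 (by positivity))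
    have k3 : (8/3) * (β * t) * Real.exp (-(β * t)) ≤ 1 :=
      (aux_te β t).resolve_right (not_lt.2 (by positivity))
    have k4 : Real.exp (-(α * t)) - Real.exp (-(β * t)) ≤
        (b - a) * (t * Real.exp (-(α * t)) + t * Real.exp (-(β * t))) / 2 := by
      rw [exy]
      nlinarith [mul_le_mul_of_nonneg_left k1 (Real.exp_pos (-(α * t))).le]
    have k5 : t * Real.exp (-(α * t)) ≤ 3 / 8 / α := by
      rw [le_div_iff₀ hα0]; linarith
    have k6 : t * Real.exp (-(β * t)) ≤ 3 / 8 / β := by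
      rw [le_div_iff₀ hβ0]; linarith
    have k7 : 3 / 8 / α + 3 / 8 / β ≤ 4 * b := by
      rw [div_add_div _ _ hα0.ne' hβ0.ne', div_le_iff₀ (by positivity)]
      have q1 : 1 - a * b / 2 ≤ 8 * (a * b ^ 2) := by
        rw [hb]
        nlinarith [mul_nonneg (sub_nonneg.2 hc.le) (sub_nonneg.2 ha2.le),
          mul_nonneg (mul_nonneg (sub_nonneg.2 hc.le) (sub_nonneg.2 ha2.le)) ha]
      have q2 : α + β = 1 - a * b / 2 := by rw [hα, hβ, hb]; ring
      have q3 : α * β = a * b * (12 + a * b) / 16 := by rw [hα, hβ, hb]; ring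
      have q4 : 0 ≤ a * b * (a * b) * b := by positivity
      rw [q3]; nlinarith
    rw [ex, ey]
    have k8 : Real.exp (-(α * t)) - Real.exp (-(β * t)) ≤ (b - a) * (2 * b) := by
      nlinarith
    nlinarith

lemma aux_entries (a b t r : ℝ) (ha : 0 ≤ a) (hab : a < b) (h1 : a + b = 1) (hr : r ^ 2 = a * b) :
    (b - a) * NormedSpace.exp (t • Amat r) 0 0
      = b * Real.exp (-a * t) - a * Real.exp (-b * t) ∧
    (b - a) * NormedSpace.exp (t • Amat r) 0 1
      = - r * (Real.exp (-a * t) - Real.exp (-b * t)) ∧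
    (b - a) * NormedSpace.exp (t • Amat r) 1 0
      = r * (Real.exp (-a * t) - Real.exp (-b * t)) ∧
    (b - a) * NormedSpace.exp (t • Amat r) 1 1
      = b * Real.exp (-b * t) - a * Real.exp (-a * t) := by
  have hb0 : 0 < b := by linarith
  set P : Matrix (Fin 2) (Fin 2) ℝ := !![b, r; r, b] with hP
  have hdet : P.det = b * (b - a) := by
    rw [hP, Matrix.det_fin_two_of]; linear_combination -hr
  have hu : IsUnit P := by
    rw [Matrix.isUnit_iff_isUnit_det, hdet]
    exact (mul_pos hb0 (by linarith)).ne'.isUnit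
  have hu' : IsUnit P.det := (Matrix.isUnit_iff_isUnit_det _).1 hu
  have hAP : (t • Amat r) * P = P * Matrix.diagonal ![-a * t, -b * t] := by
    have hbb : b = 1 - a := by linarith
    ext i j
    fin_cases i <;> fin_cases j <;>
      simp [Amat, hP, Matrix.mul_apply, Fin.sum_univ_two, Matrix.diagonal]
    · linear_combination t * hr
    · ring
    · linear_combination (t * r) * h1
    · linear_combination t * hr + t * b * h1
  have hD : P⁻¹ * (t • Amat r) * P = Matrix.diagonal ![-a * t, -b * t] := by
    rw [mul_assoc, hAP, ← mul_assoc, Matrix.nonsing_inv_mul _ hu', one_mul]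
  have h2 := Matrix.exp_conj' P (t • Amat r) hu
  rw [hD, Matrix.exp_diagonal] at h2
  have h3 : NormedSpace.exp (t • Amat r) * P = P * Matrix.diagonal (NormedSpace.exp ![-a * t, -b * t]) := by
    rw [h2, ← mul_assoc, ← mul_assoc, Matrix.mul_nonsing_inv _ hu', one_mul]
  have e0 : NormedSpace.exp ![-a * t, -b * t] 0 = Real.exp (-a * t) := by
    rw [Pi.coe_exp, Real.exp_eq_exp_ℝ]; simp
  have e1 : NormedSpace.exp ![-a * t, -b * t] 1 = Real.exp (-b * t) := by
    rw [Pi.coe_exp, Real.exp_eq_exp_ℝ]; simp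
  generalize NormedSpace.exp (t • Amat r) = G at h3 ⊢
  generalize NormedSpace.exp ![-a * t, -b * t] = v at h3 e0 e1
  rw [← e0, ← e1]
  have m00 := congrFun (congrFun h3 0) 0
  have m01 := congrFun (congrFun h3 0) 1
  have m10 := congrFun (congrFun h3 1) 0
  have m11 := congrFun (congrFun h3 1) 1
  simp [hP, Matrix.mul_apply, Fin.sum_univ_two, Matrix.diagonal] at m00 m01 m10 m11
  refine ⟨?_, ?_, ?_, ?_⟩ <;> apply mul_left_cancel₀ hb0.ne'
  · linear_combination b * m00 - r * m01 + (G 0 0 - v 1) * hr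
  · linear_combination b * m01 - r * m00 + G 0 1 * hr
  · linear_combination b * m10 - r * m11 + G 1 0 * hr
  · linear_combination b * m11 - r * m10 + (G 1 1 - v 0) * hr

set_option maxHeartbeats 1000000 in
lemma aux_main (r : ℝ) (hr0 : 0 ≤ r) (hr1 : r < 1/2) (t : ℝ) (ht : 0 ≤ t) :
    |NormedSpace.exp (t • Amat r) 0 0| ≤
        2 * (Real.exp (-r^2 * t / 4) + r^2 * Real.exp (-3 * t / 4)) ∧
    |NormedSpace.exp (t • Amat r) 0 1| ≤
        2 * r * (Real.exp (-r^2 * t / 4) + Real.exp (-3 * t / 4)) ∧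
    |NormedSpace.exp (t • Amat r) 1 0| ≤
        2 * r * (Real.exp (-r^2 * t / 4) + Real.exp (-3 * t / 4)) ∧
    |NormedSpace.exp (t • Amat r) 1 1| ≤
        2 * (r^2 * Real.exp (-r^2 * t / 4) + Real.exp (-3 * t / 4)) := by
  have hpos : 0 < 1 - 4 * r ^ 2 := by nlinarith
  obtain ⟨d, hd⟩ : ∃ d, d = Real.sqrt (1 - 4 * r ^ 2) := ⟨_, rfl⟩
  have hd0 : 0 < d := hd ▸ Real.sqrt_pos.2 hpos
  have hd2 : d ^ 2 = 1 - 4 * r ^ 2 := by rw [hd]; exact Real.sq_sqrt hpos.le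
  have hd1 : d ≤ 1 := by nlinarith [sq_nonneg r]
  obtain ⟨a, hadef⟩ : ∃ a, a = (1 - d) / 2 := ⟨_, rfl⟩
  obtain ⟨b, hbdef⟩ : ∃ b, b = (1 + d) / 2 := ⟨_, rfl⟩
  have ha : 0 ≤ a := by linarith
  have hab : a < b := by linarith
  have h1 : a + b = 1 := by linarith
  have hr : r ^ 2 = a * b := by rw [hadef, hbdef]; linarith
  have hba : b - a = d := by linarith
  obtain ⟨g00, g01, g10, g11⟩ := aux_entries a b t r ha hab h1 hr
  have hS := aux_S a b t ha hab h1 ht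
  rw [← hr] at hS
  rw [hba] at g00 g01 g10 g11 hS
  have hxE : Real.exp (-a * t) ≤ Real.exp (-r^2 * t / 4) := by
    apply Real.exp_le_exp.2
    have : 0 ≤ a * t := by positivity
    have : a * b * t ≤ a * t := by nlinarith
    rw [neg_mul, hr]; linarith
  have hyx : Real.exp (-b * t) ≤ Real.exp (-a * t) := by
    apply Real.exp_le_exp.2; nlinarith
  have hup : Real.exp (-b * t) ≤ 2 * (r^2 * Real.exp (-r^2 * t / 4) + Real.exp (-3 * t / 4)) := by
    by_cases hb : 3 / 4 ≤ b
    · have : Real.exp (-b * t) ≤ Real.exp (-3 * t / 4) := by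
        apply Real.exp_le_exp.2; nlinarith
      have : 0 ≤ r^2 * Real.exp (-r^2 * t / 4) := by positivity
      linarith [Real.exp_pos (-3 * t / 4)]
    · push Not at hb
      have hr3 : 3 / 16 ≤ r ^ 2 := by
        have : a = 1 - b := by linarith
        rw [hr, this]; nlinarith
      have eP : Real.exp (-r^2 * t / 4) = Real.exp (-r^2 * t / 8) ^ 2 := by
        rw [← Real.exp_nat_mul]; ring_nf
      have eQ : Real.exp (-3 * t / 4) = Real.exp (-3 * t / 8) ^ 2 := by
        rw [← Real.exp_nat_mul]; ring_nf
      have ePQ : Real.exp (-b * t) ≤ Real.exp (-r^2 * t / 8) * Real.exp (-3 * t / 8) := by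
        rw [← Real.exp_add]
        apply Real.exp_le_exp.2
        have : r ^ 2 / 8 + 3 / 8 ≤ b := by nlinarith
        nlinarith
      rw [eP, eQ]
      nlinarith [sq_nonneg (Real.exp (-r^2 * t / 8) - 2 * Real.exp (-3 * t / 8)),
        mul_le_mul_of_nonneg_right hr3 (sq_nonneg (Real.exp (-r^2 * t / 8))),
        sq_nonneg (Real.exp (-3 * t / 8))]
  have hF := Real.exp_pos (-3 * t / 4)
  have hE := Real.exp_pos (-r^2 * t / 4)
  have hy0 := Real.exp_pos (-b * t)
  generalize Real.exp (-3 * t / 4) = F at *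
  generalize Real.exp (-r^2 * t / 4) = E at *
  generalize Real.exp (-a * t) = x at *
  generalize Real.exp (-b * t) = y at *
  obtain ⟨S, hSd⟩ : ∃ S, x - y = d * S := ⟨(x - y) / d, by field_simp⟩
  have hS0 : 0 ≤ S := by
    exact nonneg_of_mul_nonneg_right (hSd ▸ sub_nonneg.2 hyx) hd0
  have hSE : S ≤ 2 * b * E := by
    rw [hSd] at hS; exact le_of_mul_le_mul_left hS hd0
  have hbE : b * E ≤ E := mul_le_of_le_one_left hE.le (by linarith)
  have haS : a * S ≤ 2 * r ^ 2 * E := by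
    have h := mul_le_mul_of_nonneg_left hSE ha
    have h' : a * (2 * b * E) = 2 * r ^ 2 * E := by rw [hr]; ring
    linarith
  have hr2 : r ^ 2 * E ≤ 1 / 4 * E :=
    mul_le_mul_of_nonneg_right (by linarith) hE.le
  have f00 : NormedSpace.exp (t • Amat r) 0 0 = x + a * S := by
    apply mul_left_cancel₀ hd0.ne'; rw [g00]; linear_combination a * hSd + x * hba
  have f01 : NormedSpace.exp (t • Amat r) 0 1 = - (r * S) := by
    apply mul_left_cancel₀ hd0.ne'; rw [g01]; linear_combination -r * hSd
  have f10 : NormedSpace.exp (t • Amat r) 1 0 = r * S := by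
    apply mul_left_cancel₀ hd0.ne'; rw [g10]; linear_combination r * hSd
  have f11 : NormedSpace.exp (t • Amat r) 1 1 = y - a * S := by
    apply mul_left_cancel₀ hd0.ne'; rw [g11]; linear_combination -a * hSd + y * hba
  have haS0 : 0 ≤ a * S := by positivity
  have hrF : 0 ≤ r ^ 2 * F := by positivity
  have hrS : r * S ≤ 2 * r * (E + F) := by
    have h : S ≤ 2 * (E + F) := by linarith
    have h' := mul_le_mul_of_nonneg_left h hr0
    linarith
  rw [f00, f01, f10, f11, abs_neg, abs_of_nonneg (by positivity : 0 ≤ r * S)]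
  refine ⟨?_, hrS, hrS, ?_⟩
  · rw [abs_of_nonneg (by linarith)]
    linarith
  · rw [abs_le]
    constructor <;> linarith

lemma aux_cont (t : ℝ) (i j : Fin 2) :
    Continuous (fun r : ℝ => NormedSpace.exp (t • Amat r) i j) := by
  let : NormedRing (Matrix (Fin 2) (Fin 2) ℝ) := Matrix.linftyOpNormedRing
  let : NormedAlgebra ℝ (Matrix (Fin 2) (Fin 2) ℝ) := Matrix.linftyOpNormedAlgebra
  let : NormedAlgebra ℚ (Matrix (Fin 2) (Fin 2) ℝ) := NormedAlgebra.restrictScalars ℚ ℝ _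
  have hA : Continuous (fun r : ℝ => t • Amat r) := by
    apply continuous_matrix
    intro i j
    fin_cases i <;> fin_cases j <;> simp [Amat] <;> fun_prop
  have := (NormedSpace.exp_continuous (𝔸 := Matrix (Fin 2) (Fin 2) ℝ)).comp hA
  exact this.matrix_elem i j

theorem stmt3 (r : ℝ) (hr0 : 0 ≤ r) (hr1 : r ≤ 1/2) (t : ℝ) (ht : 0 ≤ t) :
    |NormedSpace.exp (t • Amat r) 0 0| ≤
        2 * (Real.exp (-r^2 * t / 4) + r^2 * Real.exp (-3 * t / 4)) ∧
    |NormedSpace.exp (t • Amat r) 0 1| ≤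
        2 * r * (Real.exp (-r^2 * t / 4) + Real.exp (-3 * t / 4)) ∧
    |NormedSpace.exp (t • Amat r) 1 0| ≤
        2 * r * (Real.exp (-r^2 * t / 4) + Real.exp (-3 * t / 4)) ∧
    |NormedSpace.exp (t • Amat r) 1 1| ≤
        2 * (r^2 * Real.exp (-r^2 * t / 4) + Real.exp (-3 * t / 4)) := by
  have hcl : IsClosed {r : ℝ | |NormedSpace.exp (t • Amat r) 0 0| ≤
        2 * (Real.exp (-r^2 * t / 4) + r^2 * Real.exp (-3 * t / 4)) ∧
    |NormedSpace.exp (t • Amat r) 0 1| ≤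
        2 * r * (Real.exp (-r^2 * t / 4) + Real.exp (-3 * t / 4)) ∧
    |NormedSpace.exp (t • Amat r) 1 0| ≤
        2 * r * (Real.exp (-r^2 * t / 4) + Real.exp (-3 * t / 4)) ∧
    |NormedSpace.exp (t • Amat r) 1 1| ≤
        2 * (r^2 * Real.exp (-r^2 * t / 4) + Real.exp (-3 * t / 4))} := by
    refine IsClosed.inter (isClosed_le (aux_cont t 0 0).abs (by fun_prop)) ?_
    refine IsClosed.inter (isClosed_le (aux_cont t 0 1).abs (by fun_prop)) ?_
    exact IsClosed.inter (isClosed_le (aux_cont t 1 0).abs (by fun_prop))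
      (isClosed_le (aux_cont t 1 1).abs (by fun_prop))
  have hsub := closure_minimal (s := Set.Ico (0 : ℝ) (1/2))
    (fun r hr => aux_main r hr.1 hr.2 t ht) hcl
  rw [closure_Ico (by norm_num)] at hsub
  exact hsub ⟨hr0, hr1⟩
end

section
/- There exist constants C > 0 and c > 0 such that for every real r ≥ 1/2 and every t ≥ 0, every entry of the matrix exponential exp(t • A(r)) has absolute value at most C·e^{−ct}. -/
open Matrix in
theorem deriv_entry (r t : ℝ) (i j : Fin 2) :
    HasDerivAt (fun s : ℝ => NormedSpace.exp (s • Amat r) i j)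
      ((Amat r * NormedSpace.exp (t • Amat r)) i j) t := by
  letI : NormedRing (Matrix (Fin 2) (Fin 2) ℝ) := Matrix.linftyOpNormedRing
  letI : NormedAlgebra ℝ (Matrix (Fin 2) (Fin 2) ℝ) := Matrix.linftyOpNormedAlgebra
  have h := hasDerivAt_exp_smul_const' (𝕂 := ℝ) (Amat r) t
  let L : Matrix (Fin 2) (Fin 2) ℝ →L[ℝ] ℝ :=
    LinearMap.toContinuousLinearMap (Matrix.entryLinearMap ℝ ℝ i j)
  exact L.hasFDerivAt.comp_hasDerivAt t h

theorem lyap (r b x y : ℝ) (hr : b * r = 1/4) (hb0 : 0 ≤ b) (hb : b ≤ 1/2) :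
    2 * x * (-r * y) + 2 * y * (r * x - y) - 2 * b * ((-r * y) * y + x * (r * x - y))
      + (1/6) * (x^2 + y^2 - 2 * b * (x * y)) ≤ 0 := by
  have e : 2 * x * (-r * y) + 2 * y * (r * x - y) - 2 * b * ((-r * y) * y + x * (r * x - y))
      + (1/6) * (x^2 + y^2 - 2 * b * (x * y))
      = -2 * y^2 + 2 * (b * r) * y^2 - 2 * (b * r) * x^2 + (5/3) * b * (x * y)
        + (1/6) * (x^2 + y^2) := by ring
  rw [e, hr]
  have h1 : b * (x * y) ≤ b * ((x^2+y^2)/2) :=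
    mul_le_mul_of_nonneg_left (by nlinarith [sq_nonneg (x-y)]) hb0
  have h3 : b * (x * y) ≤ b * (x^2/4 + y^2) :=
    mul_le_mul_of_nonneg_left (by nlinarith [sq_nonneg (x-2*y)]) hb0
  have h4 : b * (x^2/4 + y^2) ≤ 1/2 * (x^2/4 + y^2) :=
    mul_le_mul_of_nonneg_right hb (by positivity)
  nlinarith [sq_nonneg x, sq_nonneg y]

theorem column_bound (r t : ℝ) (hr : 1/2 ≤ r) (ht : 0 ≤ t) (j : Fin 2) :
    (NormedSpace.exp (t • Amat r) 0 j)^2 + (NormedSpace.exp (t • Amat r) 1 j)^2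
      ≤ 2 * Real.exp (-(1/6) * t) := by
  have hr0 : 0 < r := by linarith
  obtain ⟨b, hb⟩ : ∃ b, b = 1/(4*r) := ⟨_, rfl⟩
  have hbr : b * r = 1/4 := by rw [hb]; field_simp
  have hb0 : 0 ≤ b := by rw [hb]; positivity
  have hb1 : b ≤ 1/2 := by nlinarith
  obtain ⟨x, hx⟩ : ∃ x : ℝ → ℝ, x = fun s => NormedSpace.exp (s • Amat r) 0 j := ⟨_, rfl⟩
  obtain ⟨y, hy⟩ : ∃ y : ℝ → ℝ, y = fun s => NormedSpace.exp (s • Amat r) 1 j := ⟨_, rfl⟩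
  have dx : ∀ s, HasDerivAt x (-r * y s) s := fun s => by
    have := deriv_entry r s 0 j
    rw [hx, hy]
    simpa [Amat, Matrix.mul_apply, Fin.sum_univ_two] using this
  have dy : ∀ s, HasDerivAt y (r * x s - y s) s := fun s => by
    have := deriv_entry r s 1 j
    rw [hx, hy]
    simpa [Amat, Matrix.mul_apply, Fin.sum_univ_two, sub_eq_add_neg] using this
  have dF : ∀ s, HasDerivAt
      (fun s => ((x s)^2 + (y s)^2 - 2 * b * (x s * y s)) * Real.exp ((1/6) * s))
      ((2 * x s * (-r * y s) + 2 * y s * (r * x s - y s)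
        - 2 * b * ((-r * y s) * y s + x s * (r * x s - y s))
      + (1/6) * ((x s)^2 + (y s)^2 - 2 * b * (x s * y s))) * Real.exp ((1/6) * s)) s := fun s => by
    have h := ((((dx s).pow 2).add ((dy s).pow 2)).sub
      (((dx s).mul (dy s)).const_mul (2*b))).mul (((hasDerivAt_id s).const_mul (1/6 : ℝ)).exp)
    refine h.congr_deriv ?_
    simp
    ring
  have anti := antitone_of_hasDerivAt_nonpos dF (fun s =>
    mul_nonpos_of_nonpos_of_nonneg (lyap r b (x s) (y s) hbr hb0 hb1) (Real.exp_pos _).le)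
  have h0 := anti ht
  have i0 : (x 0)^2 + (y 0)^2 - 2 * b * (x 0 * y 0) = 1 := by
    rw [hx, hy]
    fin_cases j <;> simp [NormedSpace.exp_zero]
  simp only [i0, mul_zero, Real.exp_zero, mul_one] at h0
  have e1 : Real.exp (-(1/6) * t) * Real.exp ((1/6) * t) = 1 := by
    rw [← Real.exp_add]; simp
  have hE : (x t)^2 + (y t)^2 - 2 * b * (x t * y t) ≤ Real.exp (-(1/6) * t) := by
    exact le_of_mul_le_mul_right (h0.trans e1.ge) (Real.exp_pos _)
  have h1 : b * (x t * y t) ≤ b * (((x t)^2+(y t)^2)/2) :=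
    mul_le_mul_of_nonneg_left (by nlinarith [sq_nonneg (x t - y t)]) hb0
  have h2 : b * (((x t)^2+(y t)^2)/2) ≤ 1/2 * (((x t)^2+(y t)^2)/2) :=
    mul_le_mul_of_nonneg_right hb1 (by positivity)
  have : (x t)^2 + (y t)^2 ≤ 2 * Real.exp (-(1/6) * t) := by linarith
  simpa only [hx, hy] using this

theorem stmt4 :
    ∃ C > (0:ℝ), ∃ c > (0:ℝ), ∀ r : ℝ, 1/2 ≤ r → ∀ t : ℝ, 0 ≤ t →
      ∀ i j : Fin 2, |NormedSpace.exp (t • Amat r) i j| ≤ C * Real.exp (-c * t) := by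
  refine ⟨2, by norm_num, 1/12, by norm_num, fun r hr t ht i j => ?_⟩
  have h := column_bound r t hr ht j
  have e : Real.exp (-(1/6) * t) = (Real.exp (-(1/12) * t))^2 := by
    rw [← Real.exp_nat_mul]; congr 1; push_cast; ring
  rw [e] at h
  apply abs_le_of_sq_le_sq _ (by positivity)
  fin_cases i
  · show (NormedSpace.exp (t • Amat r) 0 j)^2 ≤ _
    nlinarith [sq_nonneg (NormedSpace.exp (t • Amat r) 1 j), sq_nonneg (Real.exp (-(1/12) * t))]
  · show (NormedSpace.exp (t • Amat r) 1 j)^2 ≤ _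
    nlinarith [sq_nonneg (NormedSpace.exp (t • Amat r) 0 j), sq_nonneg (Real.exp (-(1/12) * t))]
end

section
/- For every nonnegative integer k there exists a constant C > 0 with the following property. Let t ≥ 0, M ≥ 0, let F : ℝ³ → ℂ be measurable, and let H ∈ L²(ℝ³). Assume that for almost every ξ with ‖ξ‖ ≤ 1/2 one has |F(ξ)| ≤ M·‖ξ‖^k·e^{−‖ξ‖²·t/4}, and for almost every ξ with ‖ξ‖ > 1/2 one has |F(ξ)| ≤ e^{−t/4}·|H(ξ)|. Then F ∈ L²(ℝ³) and ‖F‖_{L²} ≤ C·(1 + t)^{−3/4 − k/2}·(M + ‖H‖_{L²}). -/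
open MeasureTheory

abbrev E3 := EuclideanSpace ℝ (Fin 3)

noncomputable def gk (k : ℕ) (x : E3) : ℝ := ‖x‖ ^ k * Real.exp (-‖x‖ ^ 2 / 4)

lemma gk_cont (k : ℕ) : Continuous (gk k) := by
  unfold gk; fun_prop

lemma gk_memLp (k : ℕ) : MemLp (gk k) 2 volume := by
  rw [memLp_two_iff_integrable_sq (gk_cont k).aestronglyMeasurable]
  have h := (integrable_fun_norm_addHaar (volume : Measure E3)
    (f := fun r : ℝ => (r ^ k * Real.exp (-r ^ 2 / 4)) ^ 2)).2
  apply h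
  have h2 := (integrable_rpow_mul_exp_neg_mul_sq (b := 1/2) (by norm_num)
    (s := ((2 * k + 2 : ℕ) : ℝ)) (by have : (0:ℝ) ≤ ((2 * k + 2 : ℕ) : ℝ) := by positivity
                                     linarith)).integrableOn (s := Set.Ioi 0)
  refine h2.congr_fun ?_ measurableSet_Ioi
  intro r _
  simp only [Real.rpow_natCast, finrank_euclideanSpace, Fintype.card_fin, smul_eq_mul]
  rw [mul_pow, ← Real.exp_nat_mul]
  have : ((2:ℕ):ℝ) * (-r ^ 2 / 4) = -(1/2) * r ^ 2 := by push_cast; ring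
  rw [this]; norm_num; ring

lemma gk_scale (k : ℕ) (s : ℝ) (hs : 0 < s) :
    eLpNorm (fun x : E3 => gk k (s • x)) 2 volume
      = ENNReal.ofReal (s ^ (-(3/2) : ℝ)) * eLpNorm (gk k) 2 volume := by
  have h1 : eLpNorm (gk k) 2 (Measure.map (fun x : E3 => s • x) volume)
      = eLpNorm (fun x : E3 => gk k (s • x)) 2 volume :=
    eLpNorm_map_measure (gk_cont k).aestronglyMeasurable (by fun_prop)
  rw [← h1]
  have h2 := Measure.map_addHaar_smul (volume : Measure E3) hs.ne'
  rw [show (fun x : E3 => s • x) = (s • ·) from rfl, h2]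
  rw [eLpNorm_smul_measure_of_ne_top (by norm_num)]
  rw [smul_eq_mul, finrank_euclideanSpace, Fintype.card_fin, abs_of_pos (by positivity),
    ENNReal.ofReal_rpow_of_pos (by positivity)]
  congr 2
  rw [← Real.rpow_natCast, ← Real.rpow_neg hs.le, ← Real.rpow_mul hs.le]
  norm_num

lemma exp_decay (k : ℕ) : ∃ C > (0:ℝ), ∀ t : ℝ, 0 ≤ t →
    Real.exp (-t/4) ≤ C * (1 + t) ^ (-(3/4) - (k : ℝ)/2) := by
  refine ⟨(4 * (k + 1 : ℝ)) ^ (k + 1) * Real.exp (1/4), by positivity, fun t ht => ?_⟩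
  have hn : (0:ℝ) < 4 * (k + 1 : ℝ) := by positivity
  have h1 : (1 + t) ^ (k + 1) ≤ (4 * (k + 1 : ℝ)) ^ (k + 1) * Real.exp ((1 + t) / 4) := by
    have h : (1 + t) / (4 * (k + 1 : ℝ)) ≤ Real.exp ((1 + t) / (4 * (k + 1 : ℝ))) := by
      have := Real.add_one_le_exp ((1 + t) / (4 * (k + 1 : ℝ)))
      linarith
    have h' : 1 + t ≤ (4 * (k + 1 : ℝ)) * Real.exp ((1 + t) / (4 * (k + 1 : ℝ))) := by
      rwa [div_le_iff₀' hn] at h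
    calc (1 + t) ^ (k + 1) ≤ ((4 * (k + 1 : ℝ)) * Real.exp ((1 + t) / (4 * (k + 1 : ℝ)))) ^ (k+1) :=
          pow_le_pow_left₀ (by linarith) h' _
      _ = _ := by
          rw [mul_pow, ← Real.exp_nat_mul]
          congr 2; push_cast; field_simp
  have h2 : (1 + t) ^ (3/4 + (k:ℝ)/2) ≤ (1 + t) ^ (k + 1) := by
    rw [← Real.rpow_natCast]
    apply Real.rpow_le_rpow_of_exponent_le (by linarith)
    push_cast
    have : (0:ℝ) ≤ k := by positivity
    linarith
  have h3 := h2.trans h1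
  rw [show (-(3/4) - (k : ℝ)/2) = -(3/4 + (k:ℝ)/2) by ring, Real.rpow_neg (by linarith),
    ← div_eq_mul_inv, le_div_iff₀ (by positivity)]
  calc _ ≤ Real.exp (-t/4) * ((4 * (k + 1 : ℝ)) ^ (k + 1) * Real.exp ((1 + t) / 4)) := by gcongr
    _ = (4 * (k + 1 : ℝ)) ^ (k + 1) * (Real.exp (-t/4) * Real.exp ((1 + t) / 4)) := by ring
    _ = _ := by rw [← Real.exp_add]; congr 2; ring

theorem stmt10 (k : ℕ) :
    ∃ C > (0:ℝ), ∀ (t M : ℝ), 0 ≤ t → 0 ≤ M →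
      ∀ (F H : EuclideanSpace ℝ (Fin 3) → ℂ), Measurable F → MemLp H 2 volume →
        (∀ᵐ ξ ∂(volume : Measure (EuclideanSpace ℝ (Fin 3))),
          ‖ξ‖ ≤ 1/2 → ‖F ξ‖ ≤ M * ‖ξ‖ ^ k * Real.exp (-‖ξ‖ ^ 2 * t / 4)) →
        (∀ᵐ ξ ∂(volume : Measure (EuclideanSpace ℝ (Fin 3))),
          1/2 < ‖ξ‖ → ‖F ξ‖ ≤ Real.exp (-t / 4) * ‖H ξ‖) →
        MemLp F 2 volume ∧
        eLpNorm F 2 volume ≤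
          ENNReal.ofReal (C * (1 + t) ^ (-(3/4) - (k : ℝ)/2) *
            (M + (eLpNorm H 2 volume).toReal)) := by
  obtain ⟨C2, hC2, hdec⟩ := exp_decay k
  set N := (eLpNorm (gk k) 2 volume).toReal with hN
  have hN0 : 0 ≤ N := ENNReal.toReal_nonneg
  have hNe : eLpNorm (gk k) 2 volume = ENNReal.ofReal N :=
    (ENNReal.ofReal_toReal (gk_memLp k).2.ne).symm
  refine ⟨Real.exp (1/16) * N + C2, by positivity, ?_⟩
  intro t M ht hM F H hF hH hlow hhigh
  set h := (eLpNorm H 2 volume).toReal with hh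
  have hh0 : 0 ≤ h := ENNReal.toReal_nonneg
  have hHe : eLpNorm H 2 volume = ENNReal.ofReal h := (ENNReal.ofReal_toReal hH.2.ne).symm
  have ht1 : (0:ℝ) < 1 + t := by linarith
  set s := (1 + t) ^ (1/2 : ℝ) with hs
  have hs0 : 0 < s := by positivity
  have hs2 : s ^ 2 = 1 + t := by
    rw [hs, ← Real.rpow_natCast, ← Real.rpow_mul ht1.le]; norm_num
  set A := M * Real.exp (1/16) * s ^ (-(k:ℝ)) with hA
  have hA0 : 0 ≤ A := by positivity
  set P := (1 + t) ^ (-(3/4) - (k : ℝ)/2) with hP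
  have hP0 : 0 < P := by positivity
  have hAP : A * s ^ (-(3/2) : ℝ) = M * Real.exp (1/16) * P := by
    rw [hA, mul_assoc, ← Real.rpow_add hs0, hs, ← Real.rpow_mul ht1.le, hP]
    congr 2; ring
  have hpt : ∀ᵐ ξ ∂(volume : Measure E3),
      ‖F ξ‖ ≤ ((A • fun x : E3 => gk k (s • x)) + (Real.exp (-t/4) • fun x => ‖H x‖)) ξ := by
    filter_upwards [hlow, hhigh] with ξ h1 h2
    simp only [Pi.add_apply, Pi.smul_apply, smul_eq_mul]
    have g0 : 0 ≤ A * gk k (s • ξ) := by unfold gk; positivity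
    have g1 : 0 ≤ Real.exp (-t/4) * ‖H ξ‖ := by positivity
    rcases le_or_gt ‖ξ‖ (1/2) with hc | hc
    · refine (h1 hc).trans (le_trans ?_ (le_add_of_nonneg_right g1))
      have e1 : A * gk k (s • ξ)
          = M * ‖ξ‖ ^ k * Real.exp (1/16 + -(‖ξ‖ ^ 2 * (1 + t)) / 4) := by
        unfold gk
        rw [norm_smul, Real.norm_of_nonneg hs0.le, mul_pow, mul_pow, hs2, hA, Real.rpow_neg hs0.le,
          Real.rpow_natCast, Real.exp_add]
        field_simp
      rw [e1]
      gcongr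
      nlinarith [norm_nonneg ξ]
    · exact (h2 hc).trans (le_add_of_nonneg_left g0)
  have mG : AEStronglyMeasurable (A • fun x : E3 => gk k (s • x)) volume := by
    apply Continuous.aestronglyMeasurable
    exact ((gk_cont k).comp (continuous_const_smul s)).const_smul A
  have mH : AEStronglyMeasurable (Real.exp (-t/4) • fun x => ‖H x‖) volume :=
    hH.1.norm.const_smul _
  have key : eLpNorm F 2 volume ≤
      ENNReal.ofReal ((Real.exp (1/16) * N + C2) * P * (M + h)) := by
    calc eLpNorm F 2 volume ≤ _ := eLpNorm_mono_ae_real hpt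
      _ ≤ _ := eLpNorm_add_le mG mH (by norm_num)
      _ = ENNReal.ofReal (A * (s ^ (-(3/2) : ℝ) * N)) + ENNReal.ofReal (Real.exp (-t/4) * h) := by
        rw [eLpNorm_const_smul, eLpNorm_const_smul, gk_scale k s hs0, eLpNorm_norm, hNe, hHe,
          Real.enorm_of_nonneg hA0, Real.enorm_of_nonneg (Real.exp_pos _).le,
          ENNReal.ofReal_mul hA0, ENNReal.ofReal_mul (p := s ^ (-(3/2) : ℝ)) (by positivity),
          ENNReal.ofReal_mul (p := Real.exp (-t/4)) (by positivity)]
      _ = ENNReal.ofReal (A * (s ^ (-(3/2) : ℝ) * N) + Real.exp (-t/4) * h) :=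
        (ENNReal.ofReal_add (by positivity) (by positivity)).symm
      _ ≤ _ := by
        apply ENNReal.ofReal_le_ofReal
        rw [← mul_assoc, hAP]
        have a1 := mul_le_mul_of_nonneg_right (hdec t ht) hh0
        have a2 : 0 ≤ Real.exp (1/16) * N * P * h := by positivity
        have a3 : 0 ≤ C2 * P * M := by positivity
        nlinarith
  exact ⟨⟨hF.aestronglyMeasurable, key.trans_lt ENNReal.ofReal_lt_top⟩, key⟩
end
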